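/- arXiv:1906.06872 — 8 statements merged into one kernel-verified Lean document; each statement's English description precedes it below -/
import Mathlib

section
/- (Weak duality for second order discrete inclusions, Theorem 3.2.) Let N ≥ 2, F(·,t) : ℝⁿ × ℝⁿ ⇉ ℝⁿ for t = 0,…,N−2, φ : ℝⁿ × ℝⁿ → ℝ ∪ {+∞}, and Q₀, Q₁ ⊆ ℝⁿ. For every feasible trajectory {x_t}_{t=0}^N of (P_D) and every choice of vectors x*_t ∈ ℝⁿ (t = 0,…,N) and μ*_t ∈ ℝⁿ (t = 0,…,N−1), the inequality φ(x_{N−1}, x_N) ≥ −φ*(μ*_{N−1} − x*_{N−1}, −x*_N) + Σ_{t=0}^{N−2} M_{F(·,t)}(x*_t − μ*_t, μ*_{t+1}, x*_{t+2}) − W_{Q₀}(x*₀ − μ*₀) − W_{Q₁}(x*₁) holds in ℝ ∪ {±∞}. -/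
open scoped RealInnerProductSpace Pointwise
open MeasureTheory Matrix

noncomputable section

abbrev En (n : ℕ) := EuclideanSpace ℝ (Fin n)

/-- Fenchel conjugate of an extended-real-valued function on a product of two
inner product spaces (inner product of pairs is the sum of componentwise inner products). -/
def fconj2 {V W : Type*} [NormedAddCommGroup V] [InnerProductSpace ℝ V]
    [NormedAddCommGroup W] [InnerProductSpace ℝ W]
    (g : V × W → EReal) (u : V) (w : W) : EReal :=
  ⨆ p : V × W, ((⟪p.1, u⟫ + ⟪p.2, w⟫ : ℝ) : EReal) - g p

/-- Fenchel conjugate on a triple product. -/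
def fconj3 {V : Type*} [NormedAddCommGroup V] [InnerProductSpace ℝ V]
    (g : V × V × V → EReal) (u₁ u₂ u₃ : V) : EReal :=
  ⨆ p : V × V × V,
    ((⟪p.1, u₁⟫ + ⟪p.2.1, u₂⟫ + ⟪p.2.2, u₃⟫ : ℝ) : EReal) - g p

/-- Fenchel conjugate on a finite power of an inner product space. -/
def fconjPi {N : ℕ} {V : Type*} [NormedAddCommGroup V] [InnerProductSpace ℝ V]
    (g : (Fin N → V) → EReal) (u : Fin N → V) : EReal :=
  ⨆ w : Fin N → V, ((∑ i, ⟪w i, u i⟫ : ℝ) : EReal) - g w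

/-- Support function `W_A`. -/
def suppFn {V : Type*} [NormedAddCommGroup V] [InnerProductSpace ℝ V]
    (A : Set V) (u : V) : EReal :=
  ⨆ x ∈ A, ((⟪x, u⟫ : ℝ) : EReal)

/-- The function `M_F(x*,y*,z*) = inf {⟨x,x*⟩+⟨y,y*⟩-⟨z,z*⟩ : (x,y,z) ∈ gph F}`. -/
def MF {V : Type*} [NormedAddCommGroup V] [InnerProductSpace ℝ V]
    (F : V → V → Set V) (x' y' z' : V) : EReal :=
  ⨅ (x : V) (y : V) (z : V) (_ : z ∈ F x y),
    ((⟪x, x'⟫ + ⟪y, y'⟫ - ⟪z, z'⟫ : ℝ) : EReal)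

/-- Hamiltonian `H_F(x,y,z*) = sup {⟨z,z*⟩ : z ∈ F(x,y)}` (`⊥` if `F(x,y) = ∅`). -/
def HF {V : Type*} [NormedAddCommGroup V] [InnerProductSpace ℝ V]
    (F : V → V → Set V) (x y z' : V) : EReal :=
  ⨆ z ∈ F x y, ((⟪z, z'⟫ : ℝ) : EReal)

/-- Locally adjoint mapping `F*(z*;(x,y,·))`. -/
def LAM {V : Type*} [NormedAddCommGroup V] [InnerProductSpace ℝ V]
    (F : V → V → Set V) (z' x y : V) : Set (V × V) :=
  {p | ∀ x₁ y₁ : V, HF F x₁ y₁ z' - HF F x y z' ≤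
    ((⟪p.1, x₁ - x⟫ + ⟪p.2, y₁ - y⟫ : ℝ) : EReal)}

/-- Argmaximum set `F_A(x,y,z*)`. -/
def FA {V : Type*} [NormedAddCommGroup V] [InnerProductSpace ℝ V]
    (F : V → V → Set V) (x y z' : V) : Set V :=
  {z ∈ F x y | ((⟪z, z'⟫ : ℝ) : EReal) = HF F x y z'}

/-- Subdifferential of an extended-real-valued function on a product of two spaces. -/
def subdiff2 {V W : Type*} [NormedAddCommGroup V] [InnerProductSpace ℝ V]
    [NormedAddCommGroup W] [InnerProductSpace ℝ W]
    (g : V × W → EReal) (u : V × W) : Set (V × W) :=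
  {p | ∀ v : V × W,
    ((⟪p.1, v.1 - u.1⟫ + ⟪p.2, v.2 - u.2⟫ : ℝ) : EReal) ≤ g v - g u}

/-- Subdifferential of a real-valued function on a product of two spaces. -/
def subdiffR2 {V W : Type*} [NormedAddCommGroup V] [InnerProductSpace ℝ V]
    [NormedAddCommGroup W] [InnerProductSpace ℝ W]
    (g : V × W → ℝ) (u : V × W) : Set (V × W) :=
  {p | ∀ v : V × W, ⟪p.1, v.1 - u.1⟫ + ⟪p.2, v.2 - u.2⟫ ≤ g v - g u}

/-- Dual cone to the cone of tangent directions of a convex set `Q` at `x₀`. -/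
def Kstar {V : Type*} [NormedAddCommGroup V] [InnerProductSpace ℝ V]
    (Q : Set V) (x₀ : V) : Set V :=
  {x' | ∀ x ∈ Q, 0 ≤ ⟪x', x - x₀⟫}

/-- Graph of a set-valued mapping. -/
def gph {V : Type*} (F : V → V → Set V) : Set (V × V × V) :=
  {p | p.2.2 ∈ F p.1 p.2.1}

/-- Convexity of an extended-real-valued function. -/
def ERealConvexOn {V : Type*} [AddCommGroup V] [Module ℝ V] (g : V → EReal) : Prop :=
  ∀ x y : V, ∀ a b : ℝ, 0 ≤ a → 0 ≤ b → a + b = 1 →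
    g (a • x + b • y) ≤ (a : EReal) * g x + (b : EReal) * g y

/-- `g` is absolutely continuous on `[0,1]` with derivative `g' ∈ L¹`. -/
def AC {n : ℕ} (g g' : ℝ → En n) : Prop :=
  MeasureTheory.IntegrableOn g' (Set.Icc (0 : ℝ) 1) ∧
    ∀ t ∈ Set.Icc (0 : ℝ) 1, g t = g 0 + ∫ s in (0 : ℝ)..t, g' s

/-- Feasible trajectory of the continuous problem `(P_C)`. -/
structure FeasTraj {n : ℕ} (F : ℝ → En n → En n → Set (En n)) (Q₀ Q₁ : Set (En n))
    (x x' x'' : ℝ → En n) : Prop where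
  int' : MeasureTheory.IntegrableOn x' (Set.Icc (0 : ℝ) 1)
  int'' : MeasureTheory.IntegrableOn x'' (Set.Icc (0 : ℝ) 1)
  hx : ∀ t ∈ Set.Icc (0 : ℝ) 1, x t = x 0 + ∫ s in (0 : ℝ)..t, x' s
  hx' : ∀ t ∈ Set.Icc (0 : ℝ) 1, x' t = x' 0 + ∫ s in (0 : ℝ)..t, x'' s
  incl : ∀ᵐ t ∂(MeasureTheory.volume.restrict (Set.Icc (0 : ℝ) 1)), x'' t ∈ F t (x t) (x' t)
  q0 : x 0 ∈ Q₀
  q1 : x' 0 ∈ Q₁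

theorem stmt1_coe_sum (s : Finset ℕ) (f : ℕ → ℝ) :
    ((∑ t ∈ s, f t : ℝ) : EReal) = ∑ t ∈ s, (f t : EReal) := by
  classical
  induction s using Finset.induction_on with
  | empty => simp
  | insert a s ha ih => rw [Finset.sum_insert ha, Finset.sum_insert ha, EReal.coe_add, ih]

theorem stmt1_telescope {n : ℕ} (x x' μ' : ℕ → En n) (M : ℕ) :
    (∑ t ∈ Finset.range (M + 1), (⟪x t, x' t - μ' t⟫ + ⟪x (t + 1), μ' (t + 1)⟫
        - ⟪x (t + 2), x' (t + 2)⟫) : ℝ) =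
      ⟪x 0, x' 0⟫ - ⟪x 0, μ' 0⟫ + ⟪x 1, x' 1⟫ + ⟪x (M + 1), μ' (M + 1)⟫
        - ⟪x (M + 1), x' (M + 1)⟫ - ⟪x (M + 2), x' (M + 2)⟫ := by
  induction M with
  | zero =>
    simp [inner_sub_right]
    ring
  | succ k ih =>
    rw [Finset.sum_range_succ, ih]
    simp only [inner_sub_right]
    ring_nf

/-- weak duality for second order discrete inclusions (Theorem 3.2). -/
theorem stmt1 {n N : ℕ} (hN : 2 ≤ N)
    (F : ℕ → En n → En n → Set (En n)) (φ : En n × En n → EReal)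
    (Q₀ Q₁ : Set (En n))
    (x : ℕ → En n)
    (hfeas : ∀ t, t ≤ N - 2 → x (t + 2) ∈ F t (x t) (x (t + 1)))
    (hx0 : x 0 ∈ Q₀) (hx1 : x 1 ∈ Q₁)
    (x' μ' : ℕ → En n) :
    -(fconj2 φ (μ' (N - 1) - x' (N - 1)) (-(x' N)))
      + (∑ t ∈ Finset.range (N - 1), MF (F t) (x' t - μ' t) (μ' (t + 1)) (x' (t + 2)))
      - suppFn Q₀ (x' 0 - μ' 0) - suppFn Q₁ (x' 1)
      ≤ φ (x (N - 1), x N) := by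
  obtain ⟨M, rfl⟩ : ∃ M, N = M + 2 := ⟨N - 2, by omega⟩
  have e1 : M + 2 - 1 = M + 1 := by omega
  have e2 : M + 2 - 2 = M := by omega
  rw [e1]
  rw [e2] at hfeas
  have hS : (∑ t ∈ Finset.range (M + 1), MF (F t) (x' t - μ' t) (μ' (t + 1)) (x' (t + 2))) ≤
      ((∑ t ∈ Finset.range (M + 1), (⟪x t, x' t - μ' t⟫ + ⟪x (t + 1), μ' (t + 1)⟫
        - ⟪x (t + 2), x' (t + 2)⟫) : ℝ) : EReal) := by
    rw [stmt1_coe_sum]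
    refine Finset.sum_le_sum fun t ht => ?_
    have ht' : t ≤ M := by
      have := Finset.mem_range.1 ht
      omega
    exact iInf_le_of_le (x t) (iInf_le_of_le (x (t + 1)) (iInf_le_of_le (x (t + 2))
      (iInf_le_of_le (hfeas t ht') le_rfl)))
  rw [stmt1_telescope] at hS
  have h0 : ((⟪x 0, x' 0 - μ' 0⟫ : ℝ) : EReal) ≤ suppFn Q₀ (x' 0 - μ' 0) :=
    le_iSup₂_of_le (x 0) hx0 le_rfl
  have h1 : ((⟪x 1, x' 1⟫ : ℝ) : EReal) ≤ suppFn Q₁ (x' 1) :=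
    le_iSup₂_of_le (x 1) hx1 le_rfl
  have hc : ((⟪x (M + 1), μ' (M + 1) - x' (M + 1)⟫ + ⟪x (M + 2), -(x' (M + 2))⟫ : ℝ) : EReal)
      - φ (x (M + 1), x (M + 2)) ≤ fconj2 φ (μ' (M + 1) - x' (M + 1)) (-(x' (M + 2))) :=
    le_iSup_of_le (x (M + 1), x (M + 2)) le_rfl
  refine (EReal.sub_le_sub (EReal.sub_le_sub
    (add_le_add (EReal.neg_le_neg_iff.2 hc) hS) h0) h1).trans ?_
  induction φ (x (M + 1), x (M + 2)) with
  | bot => simp [← EReal.coe_add, ← EReal.coe_neg, ← EReal.coe_sub]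
  | top => exact le_top
  | coe r =>
    norm_cast
    simp only [inner_sub_right, inner_neg_right]
    linarith
end
end

section
/- (Sufficiency part of Theorem 3.1.) Let N ≥ 2, let F(·,t) : ℝⁿ × ℝⁿ ⇉ ℝⁿ be convex set-valued mappings for t = 0,…,N−2, Q₀, Q₁ ⊆ ℝⁿ nonempty convex sets, and φ : ℝⁿ × ℝⁿ → ℝ ∪ {+∞} convex. Let {x̃_t}_{t=0}^N be a feasible trajectory of (P_D), and suppose there exist vectors x*_t (t = 0,…,N) and μ*_t (t = 0,…,N−1) such that: (i) (x*_t − μ*_t, μ*_{t+1}) ∈ F*(x*_{t+2}; (x̃_t, x̃_{t+1}, x̃_{t+2}), t) and x̃_{t+2} ∈ F_A(x̃_t, x̃_{t+1}, x*_{t+2}, t) for t = 0,…,N−2; (ii) μ*₀ − x*₀ ∈ K*_{Q₀}(x̃₀) and −x*₁ ∈ K*_{Q₁}(x̃₁); (iii) (μ*_{N−1} − x*_{N−1}, −x*_N) ∈ ∂φ(x̃_{N−1}, x̃_N). Then {x̃_t} is optimal: φ(x̃_{N−1}, x̃_N) ≤ φ(x_{N−1}, x_N) for every feasible trajectory {x_t}_{t=0}^N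 of (P_D). -/
open scoped RealInnerProductSpace Pointwise
open MeasureTheory Matrix

noncomputable section

/-- sufficiency part of Theorem 3.1. -/
theorem stmt2 {n N : ℕ} (hN : 2 ≤ N)
    (F : ℕ → En n → En n → Set (En n))
    (hFconv : ∀ t, Convex ℝ (gph (F t)))
    (Q₀ Q₁ : Set (En n)) (hQ₀c : Convex ℝ Q₀) (hQ₁c : Convex ℝ Q₁)
    (hQ₀ne : Q₀.Nonempty) (hQ₁ne : Q₁.Nonempty)
    (φ : En n × En n → EReal) (hφconv : ERealConvexOn φ)
    (xt : ℕ → En n)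
    (hfeas : ∀ t, t ≤ N - 2 → xt (t + 2) ∈ F t (xt t) (xt (t + 1)))
    (hxt0 : xt 0 ∈ Q₀) (hxt1 : xt 1 ∈ Q₁)
    (x' μ' : ℕ → En n)
    (hEL : ∀ t, t ≤ N - 2 →
      (x' t - μ' t, μ' (t + 1)) ∈ LAM (F t) (x' (t + 2)) (xt t) (xt (t + 1)) ∧
      xt (t + 2) ∈ FA (F t) (xt t) (xt (t + 1)) (x' (t + 2)))
    (htr0 : μ' 0 - x' 0 ∈ Kstar Q₀ (xt 0)) (htr1 : -(x' 1) ∈ Kstar Q₁ (xt 1))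
    (htrN : (μ' (N - 1) - x' (N - 1), -(x' N)) ∈ subdiff2 φ (xt (N - 1), xt N)) :
    ∀ x : ℕ → En n, (∀ t, t ≤ N - 2 → x (t + 2) ∈ F t (x t) (x (t + 1))) →
      x 0 ∈ Q₀ → x 1 ∈ Q₁ → φ (xt (N - 1), xt N) ≤ φ (x (N - 1), x N) := by
  intro x hx hx0 hx1
  have step : ∀ t, t ≤ N - 2 →
      ⟪x' (t + 2), x (t + 2) - xt (t + 2)⟫ ≤
        ⟪x' t - μ' t, x t - xt t⟫ + ⟪μ' (t + 1), x (t + 1) - xt (t + 1)⟫ := by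
    intro t ht
    obtain ⟨h1, h2⟩ := hEL t ht
    have h3 := h1 (x t) (x (t + 1))
    rw [← h2.2] at h3
    have h4 : ((⟪x (t + 2), x' (t + 2)⟫ : ℝ) : EReal) ≤
        HF (F t) (x t) (x (t + 1)) (x' (t + 2)) :=
      le_iSup₂_of_le (f := fun z (_ : z ∈ F t (x t) (x (t + 1))) =>
        ((⟪z, x' (t + 2)⟫ : ℝ) : EReal)) (x (t + 2)) (hx t ht) le_rfl
    have h5 := (EReal.sub_le_sub h4 (le_refl ((⟪xt (t + 2), x' (t + 2)⟫ : ℝ) : EReal))).trans h3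
    rw [← EReal.coe_sub, EReal.coe_le_coe_iff] at h5
    rw [inner_sub_right, real_inner_comm (x (t + 2)), real_inner_comm (xt (t + 2))]
    exact h5
  have inv : ∀ t, t ≤ N - 1 →
      ⟪x' t - μ' t, x t - xt t⟫ + ⟪x' (t + 1), x (t + 1) - xt (t + 1)⟫ ≤ 0 := by
    intro t
    induction t with
    | zero =>
      intro _
      have h0 := htr0 (x 0) hx0
      have h1 := htr1 (x 1) hx1
      rw [← neg_sub, inner_neg_left] at h0
      rw [inner_neg_left] at h1
      simp only [zero_add]
      linarith
    | succ t ih =>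
      intro ht
      have h1 := ih (by omega)
      have h2 := step t (by omega)
      rw [inner_sub_left (x' (t + 1))]
      have e : t + 1 + 1 = t + 2 := rfl
      rw [e]
      linarith
  have hI := inv (N - 1) le_rfl
  have e : N - 1 + 1 = N := by omega
  rw [e] at hI
  have hself := htrN (xt (N - 1), xt N)
  have hv := htrN (x (N - 1), x N)
  simp only [sub_self, inner_zero_right, add_zero, EReal.coe_zero] at hself
  have hv2 : (0 : EReal) ≤ φ (x (N - 1), x N) - φ (xt (N - 1), xt N) := by
    refine le_trans ?_ hv
    rw [← EReal.coe_zero, EReal.coe_le_coe_iff]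
    simp only []
    rw [← neg_sub (x' (N - 1)), inner_neg_left, inner_neg_left]
    linarith
  generalize φ (xt (N - 1), xt N) = a at *
  generalize φ (x (N - 1), x N) = b at *
  induction a with
  | bot => exact bot_le
  | top => simp at hself
  | coe a =>
    induction b with
    | bot => simp at hv2
    | top => exact le_top
    | coe b =>
      rw [← EReal.coe_sub, ← EReal.coe_zero, EReal.coe_le_coe_iff] at hv2
      rw [EReal.coe_le_coe_iff]
      linarith
end
end

section
/- (Euler–Lagrange conditions as a duality relation, Theorem 3.3, sufficiency direction.) Let N ≥ 2, let F(·,t) : ℝⁿ × ℝⁿ ⇉ ℝⁿ be convex set-valued mappings, Q₀, Q₁ ⊆ ℝⁿ nonempty convex sets, φ : ℝⁿ × ℝⁿ → ℝ ∪ {+∞} proper convex. Suppose {x̃_t}_{t=0}^N is feasible for (P_D) and vectors x*_t (t = 0,…,N), μ*_t (t = 0,…,N−1) satisfy: (i) (x*_t − μ*_t, μ*_{t+1}) ∈ F*(x*_{t+2}; (x̃_t, x̃_{t+1}, x̃_{t+2}), t) and x̃_{t+2} ∈ F_A(x̃_t, x̃_{t+1}, x*_{t+2}, t) for t = 0,…,N−2;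 (ii) μ*₀ − x*₀ ∈ K*_{Q₀}(x̃₀) and −x*₁ ∈ K*_{Q₁}(x̃₁); (iii) (μ*_{N−1} − x*_{N−1}, −x*_N) ∈ ∂φ(x̃_{N−1}, x̃_N). Then the dual objective attains the primal value: −φ*(μ*_{N−1} − x*_{N−1}, −x*_N) + Σ_{t=0}^{N−2} M_{F(·,t)}(x*_t − μ*_t, μ*_{t+1}, x*_{t+2}) − W_{Q₀}(x*₀ − μ*₀) − W_{Q₁}(x*₁) = φ(x̃_{N−1}, x̃_N). -/
open scoped RealInnerProductSpace Pointwise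
open MeasureTheory Matrix

noncomputable section

theorem aux_supp {V : Type*} [NormedAddCommGroup V] [InnerProductSpace ℝ V]
    (A : Set V) (u x₀ : V) (h₀ : x₀ ∈ A) (h : ∀ x ∈ A, ⟪x, u⟫ ≤ ⟪x₀, u⟫) :
    suppFn A u = ((⟪x₀, u⟫ : ℝ) : EReal) := by
  unfold suppFn
  apply le_antisymm
  · exact iSup₂_le fun x hx => EReal.coe_le_coe_iff.2 (h x hx)
  · exact le_iSup₂ (f := fun (x : V) (_ : x ∈ A) => ((⟪x, u⟫ : ℝ) : EReal)) x₀ h₀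

theorem aux_MF {V : Type*} [NormedAddCommGroup V] [InnerProductSpace ℝ V]
    (F : V → V → Set V) (x y z p q z' : V)
    (h1 : (p, q) ∈ LAM F z' x y) (h2 : z ∈ FA F x y z') :
    MF F p q z' = ((⟪x, p⟫ + ⟪y, q⟫ - ⟪z, z'⟫ : ℝ) : EReal) := by
  obtain ⟨hz, hH⟩ := h2
  unfold MF
  apply le_antisymm
  · exact iInf_le_of_le x (iInf_le_of_le y (iInf_le_of_le z (iInf_le_of_le hz le_rfl)))
  · refine le_iInf fun a => le_iInf fun b => le_iInf fun c => le_iInf fun hc => ?_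
    have h3 := h1 a b
    rw [← hH] at h3
    have h4 : ((⟪c, z'⟫ : ℝ) : EReal) ≤ HF F a b z' :=
      le_iSup₂ (f := fun (x : V) (_ : x ∈ F a b) => ((⟪x, z'⟫ : ℝ) : EReal)) c hc
    have h5 := (EReal.sub_le_sub h4 (le_refl ((⟪z, z'⟫ : ℝ) : EReal))).trans h3
    rw [← EReal.coe_sub, EReal.coe_le_coe_iff] at h5
    simp only [inner_sub_right] at h5
    rw [EReal.coe_le_coe_iff, real_inner_comm p x, real_inner_comm q y, real_inner_comm p a,
      real_inner_comm q b]
    linarith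

theorem aux_conj {V W : Type*} [NormedAddCommGroup V] [InnerProductSpace ℝ V]
    [NormedAddCommGroup W] [InnerProductSpace ℝ W]
    (g : V × W → EReal) (u : V × W) (p : V) (q : W) (c : ℝ) (hb : ∀ v, g v ≠ ⊥)
    (hc : g u = (c : EReal)) (h : (p, q) ∈ subdiff2 g u) :
    fconj2 g p q = ((⟪u.1, p⟫ + ⟪u.2, q⟫ - c : ℝ) : EReal) := by
  unfold fconj2
  apply le_antisymm
  · refine iSup_le fun v => ?_
    have h1 := h v
    have h2 := hb v
    rw [hc] at h1
    induction hv : g v with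
    | bot => exact absurd hv h2
    | top => simp
    | coe r =>
      rw [hv, ← EReal.coe_sub, EReal.coe_le_coe_iff] at h1
      simp only [inner_sub_right] at h1
      rw [← EReal.coe_sub, EReal.coe_le_coe_iff, real_inner_comm p v.1, real_inner_comm q v.2,
        real_inner_comm p u.1, real_inner_comm q u.2]
      linarith
  · refine le_trans (le_of_eq ?_) (le_iSup _ u)
    rw [hc, ← EReal.coe_sub]

theorem aux_coe_sum (f : ℕ → ℝ) (k : ℕ) :
    ((∑ t ∈ Finset.range k, f t : ℝ) : EReal) = ∑ t ∈ Finset.range k, (f t : EReal) := by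
  induction k with
  | zero => simp
  | succ k ih => rw [Finset.sum_range_succ, Finset.sum_range_succ, EReal.coe_add, ih]

theorem aux_tele {n : ℕ} (x a m : ℕ → En n) (k : ℕ) :
    ∑ t ∈ Finset.range k, (⟪x t, a t - m t⟫ + ⟪x (t + 1), m (t + 1)⟫
        - ⟪x (t + 2), a (t + 2)⟫)
      = ⟪x 0, a 0 - m 0⟫ + ⟪x 1, a 1⟫ + ⟪x k, m k - a k⟫ - ⟪x (k + 1), a (k + 1)⟫ := by
  induction k with
  | zero =>
    simp only [Finset.range_zero, Finset.sum_empty, inner_sub_right, zero_add]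
    ring
  | succ k ih =>
    rw [Finset.sum_range_succ, ih]
    simp only [inner_sub_right]
    ring

/-- Euler–Lagrange conditions as a duality relation
(Theorem 3.3, sufficiency direction). -/
theorem stmt3 {n N : ℕ} (hN : 2 ≤ N)
    (F : ℕ → En n → En n → Set (En n))
    (hFconv : ∀ t, Convex ℝ (gph (F t)))
    (Q₀ Q₁ : Set (En n)) (hQ₀c : Convex ℝ Q₀) (hQ₁c : Convex ℝ Q₁)
    (hQ₀ne : Q₀.Nonempty) (hQ₁ne : Q₁.Nonempty)
    (φ : En n × En n → EReal) (hφconv : ERealConvexOn φ)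
    (hφproper : (∀ p, φ p ≠ ⊥) ∧ ∃ p, φ p ≠ ⊤)
    (xt : ℕ → En n)
    (hfeas : ∀ t, t ≤ N - 2 → xt (t + 2) ∈ F t (xt t) (xt (t + 1)))
    (hxt0 : xt 0 ∈ Q₀) (hxt1 : xt 1 ∈ Q₁)
    (x' μ' : ℕ → En n)
    (hEL : ∀ t, t ≤ N - 2 →
      (x' t - μ' t, μ' (t + 1)) ∈ LAM (F t) (x' (t + 2)) (xt t) (xt (t + 1)) ∧
      xt (t + 2) ∈ FA (F t) (xt t) (xt (t + 1)) (x' (t + 2)))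
    (htr0 : μ' 0 - x' 0 ∈ Kstar Q₀ (xt 0)) (htr1 : -(x' 1) ∈ Kstar Q₁ (xt 1))
    (htrN : (μ' (N - 1) - x' (N - 1), -(x' N)) ∈ subdiff2 φ (xt (N - 1), xt N)) :
    -(fconj2 φ (μ' (N - 1) - x' (N - 1)) (-(x' N)))
      + (∑ t ∈ Finset.range (N - 1), MF (F t) (x' t - μ' t) (μ' (t + 1)) (x' (t + 2)))
      - suppFn Q₀ (x' 0 - μ' 0) - suppFn Q₁ (x' 1)
      = φ (xt (N - 1), xt N) := by
  obtain ⟨k, rfl⟩ : ∃ k, N = k + 2 := ⟨N - 2, by omega⟩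
  simp only [Nat.add_sub_cancel, show k + 2 - 1 = k + 1 by omega] at *
  obtain ⟨c, hc⟩ : ∃ c : ℝ, φ (xt (k + 1), xt (k + 2)) = (c : EReal) := by
    have h1 := htrN (xt (k + 1), xt (k + 2))
    have h2 := hφproper.1 (xt (k + 1), xt (k + 2))
    induction hv : φ (xt (k + 1), xt (k + 2)) with
    | bot => exact absurd hv h2
    | top => simp [hv] at h1
    | coe r => exact ⟨r, rfl⟩
  have hM : ∑ t ∈ Finset.range (k + 1), MF (F t) (x' t - μ' t) (μ' (t + 1)) (x' (t + 2))
      = ((∑ t ∈ Finset.range (k + 1), (⟪xt t, x' t - μ' t⟫ + ⟪xt (t + 1), μ' (t + 1)⟫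
        - ⟪xt (t + 2), x' (t + 2)⟫) : ℝ) : EReal) := by
    rw [aux_coe_sum]
    refine Finset.sum_congr rfl fun t ht => ?_
    have ht' : t ≤ k := by
      have := Finset.mem_range.1 ht
      omega
    exact aux_MF _ _ _ _ _ _ _ (hEL t ht').1 (hEL t ht').2
  rw [hM, aux_tele, aux_conj φ _ _ _ c hφproper.1 hc htrN, hc,
    aux_supp Q₀ (x' 0 - μ' 0) (xt 0) hxt0, aux_supp Q₁ (x' 1) (xt 1) hxt1]
  · rw [← EReal.coe_neg, ← EReal.coe_add, ← EReal.coe_sub, ← EReal.coe_sub, EReal.coe_eq_coe_iff]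
    simp only [inner_sub_right, inner_neg_right]
    ring
  · intro x hx
    have := htr1 x hx
    rw [real_inner_comm] at this
    simp only [inner_sub_left, inner_neg_right] at this
    linarith
  · intro x hx
    have := htr0 x hx
    rw [real_inner_comm] at this
    simp only [inner_sub_left, inner_sub_right] at this ⊢
    linarith
end
end

section
/- (Proposition 4.1.) Let δ > 0, let F : ℝⁿ × ℝⁿ ⇉ ℝⁿ be a convex set-valued mapping, and define G : ℝⁿ × ℝⁿ ⇉ ℝⁿ by G(x,y) = {2y − x + δ²v : v ∈ F(x, (y−x)/δ)}. Then for all x*, y*, z* ∈ ℝⁿ, M_G(x*, y*, z*) = δ² · M_F((x* + y* − z*)/δ², (y* − 2z*)/δ, z*), as an equality in ℝ ∪ {±∞}. -/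
open scoped RealInnerProductSpace Pointwise
open MeasureTheory Matrix

noncomputable section

/-- Proposition 4.1. -/
theorem stmt4 {n : ℕ} (δ : ℝ) (hδ : 0 < δ)
    (F G : En n → En n → Set (En n)) (hFconv : Convex ℝ (gph F))
    (hG : ∀ x y : En n,
      G x y = {z | ∃ v ∈ F x (δ⁻¹ • (y - x)), z = (2 : ℝ) • y - x + (δ ^ 2) • v})
    (x' y' z' : En n) :
    MF G x' y' z' = ((δ ^ 2 : ℝ) : EReal) *
      MF F ((δ ^ 2)⁻¹ • (x' + y' - z')) (δ⁻¹ • (y' - (2 : ℝ) • z')) z' := by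
  have hδ0 : δ ≠ 0 := hδ.ne'
  have hc : (0 : EReal) < ((δ ^ 2 : ℝ) : EReal) := by
    exact_mod_cast (by positivity : (0 : ℝ) < δ ^ 2)
  have key : ∀ x w v : En n,
      ⟪x, x'⟫ + ⟪x + δ • w, y'⟫ - ⟪(2 : ℝ) • (x + δ • w) - x + (δ ^ 2) • v, z'⟫
        = δ ^ 2 * (⟪x, (δ ^ 2)⁻¹ • (x' + y' - z')⟫ + ⟪w, δ⁻¹ • (y' - (2 : ℝ) • z')⟫
          - ⟪v, z'⟫) := by
    intro x w v
    simp only [inner_add_left, inner_sub_left, inner_add_right, inner_sub_right,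
      real_inner_smul_left, real_inner_smul_right]
    field_simp
    ring
  apply le_antisymm
  · rw [← EReal.div_le_iff_le_mul hc (EReal.coe_ne_top _)]
    refine le_iInf fun x => le_iInf fun w => le_iInf fun v => le_iInf fun hv => ?_
    rw [EReal.div_le_iff_le_mul hc (EReal.coe_ne_top _), ← EReal.coe_mul, ← key]
    refine iInf_le_of_le x (iInf_le_of_le (x + δ • w) (iInf_le_of_le _
      (iInf_le_of_le ?_ le_rfl)))
    rw [hG]
    refine ⟨v, ?_, rfl⟩
    simpa [smul_smul, hδ0] using hv
  · refine le_iInf fun x => le_iInf fun y => le_iInf fun z => le_iInf fun hz => ?_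
    rw [hG] at hz
    obtain ⟨v, hv, rfl⟩ := hz
    have hy : x + δ • (δ⁻¹ • (y - x)) = y := by simp [smul_smul, hδ0]
    have h := key x (δ⁻¹ • (y - x)) v
    rw [hy] at h
    rw [h, EReal.coe_mul]
    refine mul_le_mul_of_nonneg_left ?_ hc.le
    exact iInf_le_of_le x (iInf_le_of_le _ (iInf_le_of_le v (iInf_le_of_le hv le_rfl)))
end
end

section
/- (Lemma 4.2.) Let δ > 0, let F : ℝⁿ × ℝⁿ ⇉ ℝⁿ be a convex set-valued mapping, and let G(x,y) = {2y − x + δ²v : v ∈ F(x, (y−x)/δ)}. Given vectors x̄*(t), x̄*(t+δ), x̄*(t+2δ), μ̄*(t), μ̄*(t+δ) in ℝⁿ, set x*(s) = δ·x̄*(s), μ*(s) = δ·μ̄*(s), v*(t+δ) = (μ*(t+δ) − 2x*(t+2δ))/δ and v*(t) = (μ*(t) − 2x*(t+δ))/δ. Then M_G(x̄*(t) − μ̄*(t), μ̄*(t+δ), x̄*(t+2δ)) = δ · M_F(Δ²x*(t) + Δ₋v*(t+δ), v*(t+δ), x*(t+2δ)), where Δ²x*(t) = (x*(t+2δ) −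 2x*(t+δ) + x*(t))/δ² and Δ₋v*(t+δ) = (v*(t+δ) − v*(t))/δ. -/
open scoped RealInnerProductSpace Pointwise
open MeasureTheory Matrix

noncomputable section

/-- Lemma 4.2.  Here `xb0, xb1, xb2` stand for `x̄*(t), x̄*(t+δ), x̄*(t+2δ)`,
`mb0, mb1` for `μ̄*(t), μ̄*(t+δ)`, `x0, x1, x2, m0, m1` for the rescaled vectors and
`v0, v1` for `v*(t), v*(t+δ)`. -/
theorem stmt8 {n : ℕ} (δ : ℝ) (hδ : 0 < δ)
    (F G : En n → En n → Set (En n)) (hFconv : Convex ℝ (gph F))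
    (hG : ∀ x y : En n,
      G x y = {z | ∃ v ∈ F x (δ⁻¹ • (y - x)), z = (2 : ℝ) • y - x + (δ ^ 2) • v})
    (xb0 xb1 xb2 mb0 mb1 x0 x1 x2 m0 m1 v0 v1 : En n)
    (hx0 : x0 = δ • xb0) (hx1 : x1 = δ • xb1) (hx2 : x2 = δ • xb2)
    (hm0 : m0 = δ • mb0) (hm1 : m1 = δ • mb1)
    (hv1 : v1 = δ⁻¹ • (m1 - (2 : ℝ) • x2)) (hv0 : v0 = δ⁻¹ • (m0 - (2 : ℝ) • x1)) :
    MF G (xb0 - mb0) mb1 xb2 =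
      (δ : EReal) *
        MF F ((δ ^ 2)⁻¹ • (x2 - (2 : ℝ) • x1 + x0) + δ⁻¹ • (v1 - v0)) v1 x2 := by
  have hδ0 : δ ≠ 0 := hδ.ne'
  have hv1' : v1 = mb1 - (2 : ℝ) • xb2 := by
    rw [hv1, hm1, hx2, smul_comm (2 : ℝ) δ, ← smul_sub, smul_smul, inv_mul_cancel₀ hδ0, one_smul]
  have hA : (δ ^ 2)⁻¹ • (x2 - (2 : ℝ) • x1 + x0) + δ⁻¹ • (v1 - v0)
      = δ⁻¹ • (xb0 - mb0 + mb1 - xb2) := by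
    subst hv1 hv0 hx0 hx1 hx2 hm0 hm1
    match_scalars <;> field_simp <;> ring
  have key : ∀ x u v : En n,
      ⟪x, xb0 - mb0⟫ + ⟪x + δ • u, mb1⟫
        - ⟪(2 : ℝ) • (x + δ • u) - x + (δ ^ 2) • v, xb2⟫
      = δ * (⟪x, (δ ^ 2)⁻¹ • (x2 - (2 : ℝ) • x1 + x0) + δ⁻¹ • (v1 - v0)⟫ + ⟪u, v1⟫
        - ⟪v, x2⟫) := by
    intro x u v
    rw [hA, hv1', hx2]
    simp only [inner_add_left, inner_sub_left, inner_add_right, inner_sub_right,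
      real_inner_smul_left, real_inner_smul_right]
    field_simp
    ring
  generalize (δ ^ 2)⁻¹ • (x2 - (2 : ℝ) • x1 + x0) + δ⁻¹ • (v1 - v0) = A at key
  have hδE : (0 : EReal) < (δ : EReal) := EReal.coe_pos.mpr hδ
  have hδT : (δ : EReal) ≠ ⊤ := EReal.coe_ne_top δ
  apply le_antisymm
  · rw [← EReal.div_le_iff_le_mul hδE hδT]
    refine le_iInf fun x => le_iInf fun u => le_iInf fun v => le_iInf fun hv => ?_
    rw [EReal.div_le_iff_le_mul hδE hδT, ← EReal.coe_mul, ← key]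
    have hmem : (2 : ℝ) • (x + δ • u) - x + (δ ^ 2) • v ∈ G x (x + δ • u) := by
      rw [hG]
      refine ⟨v, ?_, rfl⟩
      rwa [add_sub_cancel_left, smul_smul, inv_mul_cancel₀ hδ0, one_smul]
    exact iInf_le_of_le x (iInf_le_of_le _ (iInf_le_of_le _ (iInf_le_of_le hmem le_rfl)))
  · refine le_iInf fun x => le_iInf fun y => le_iInf fun z => le_iInf fun hz => ?_
    rw [hG] at hz
    obtain ⟨v, hv, rfl⟩ := hz
    have hy : y = x + δ • (δ⁻¹ • (y - x)) := by
      rw [smul_smul, mul_inv_cancel₀ hδ0, one_smul, add_sub_cancel]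
    have hk := key x (δ⁻¹ • (y - x)) v
    rw [← hy] at hk
    rw [hk, EReal.coe_mul]
    refine mul_le_mul_of_nonneg_left ?_ hδE.le
    exact iInf_le_of_le x (iInf_le_of_le _ (iInf_le_of_le _ (iInf_le_of_le hv le_rfl)))
end
end

section
/- (Weak duality for semilinear second order discrete systems, Example 3.1.) Let N ≥ 2, A₀, A₁ be n×n matrices, B an n×r matrix, U ⊆ ℝʳ nonempty, Q₀, Q₁ ⊆ ℝⁿ, and φ : ℝⁿ × ℝⁿ → ℝ ∪ {+∞}. Let {x_t}_{t=0}^N satisfy x_{t+2} = A₀x_t + A₁x_{t+1} + Bu_t with u_t ∈ U for t = 0,…,N−2, x₀ ∈ Q₀, x₁ ∈ Q₁. Let x*_t ∈ ℝⁿ (t = 0,…,N) satisfy the adjoint equation x*_t = A₀ᵀx*_{t+2} + A₁ᵀx*_{t+1} for t = 0,…,N−2. Then φ(x_{N−1}, x_N) ≥ −φ*(A₁ᵀx*_N − x*_{N−1}, −x*_N) − Σ_{t=0}^{N−2} W_U(Bᵀx*_{t+2}) − W_{Q₀}(x*₀ − A₁ᵀx*₁) − W_{Q₁}(x*₁), as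 an inequality in ℝ ∪ {±∞}. -/
open scoped RealInnerProductSpace Pointwise
open MeasureTheory Matrix

noncomputable section

lemma inner_toLin_transpose {m k : ℕ} (A : Matrix (Fin m) (Fin k) ℝ) (v : En k) (w : En m) :
    ⟪Matrix.toEuclideanLin A v, w⟫ = ⟪v, Matrix.toEuclideanLin Aᵀ w⟫ := by
  have := Matrix.toEuclideanLin_conjTranspose_eq_adjoint A
  rw [Matrix.conjTranspose_eq_transpose_of_trivial] at this
  rw [this, LinearMap.adjoint_inner_right]

lemma discrete_identity {n r : ℕ} (M : ℕ)
    (A₀ A₁ : Matrix (Fin n) (Fin n) ℝ) (B : Matrix (Fin n) (Fin r) ℝ)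
    (x : ℕ → En n) (u : ℕ → En r) (x' : ℕ → En n)
    (hdyn : ∀ t, t < M → x (t + 2) =
      Matrix.toEuclideanLin A₀ (x t) + Matrix.toEuclideanLin A₁ (x (t + 1)) +
        Matrix.toEuclideanLin B (u t))
    (hadj : ∀ t, t < M → x' t =
      Matrix.toEuclideanLin A₀ᵀ (x' (t + 2)) + Matrix.toEuclideanLin A₁ᵀ (x' (t + 1))) :
    ⟪x M, Matrix.toEuclideanLin A₁ᵀ (x' (M + 1)) - x' M⟫ + ⟪x (M + 1), -(x' (M + 1))⟫
      = -(∑ t ∈ Finset.range M, ⟪u t, Matrix.toEuclideanLin Bᵀ (x' (t + 2))⟫)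
        - ⟪x 0, x' 0 - Matrix.toEuclideanLin A₁ᵀ (x' 1)⟫ - ⟪x 1, x' 1⟫ := by
  induction M with
  | zero => simp only [inner_sub_right, inner_neg_right]; simp; ring
  | succ M ih =>
    have ih := ih (fun t ht => hdyn t (by omega)) (fun t ht => hadj t (by omega))
    have h1 : ⟪x (M + 2), x' (M + 2)⟫ = ⟪x M, Matrix.toEuclideanLin A₀ᵀ (x' (M + 2))⟫
        + ⟪x (M + 1), Matrix.toEuclideanLin A₁ᵀ (x' (M + 2))⟫
        + ⟪u M, Matrix.toEuclideanLin Bᵀ (x' (M + 2))⟫ := by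
      rw [hdyn M (by omega), inner_add_left, inner_add_left, inner_toLin_transpose,
        inner_toLin_transpose, inner_toLin_transpose]
    have h2 : ⟪x M, x' M⟫ = ⟪x M, Matrix.toEuclideanLin A₀ᵀ (x' (M + 2))⟫
        + ⟪x M, Matrix.toEuclideanLin A₁ᵀ (x' (M + 1))⟫ := by
      rw [← inner_add_right, ← hadj M (by omega)]
    rw [Finset.sum_range_succ]
    simp only [inner_sub_right, inner_neg_right] at ih ⊢
    rw [show M + 1 + 1 = M + 2 from rfl]
    linarith

lemma coe_sum_EReal (M : ℕ) (f : ℕ → ℝ) :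
    ((∑ t ∈ Finset.range M, f t : ℝ) : EReal) = ∑ t ∈ Finset.range M, (f t : EReal) := by
  induction M with
  | zero => simp
  | succ M ih => rw [Finset.sum_range_succ, Finset.sum_range_succ, EReal.coe_add, ih]

lemma le_suppFn {V : Type*} [NormedAddCommGroup V] [InnerProductSpace ℝ V]
    {A : Set V} {a : V} (h : a ∈ A) (u : V) : ((⟪a, u⟫ : ℝ) : EReal) ≤ suppFn A u :=
  le_iSup₂_of_le (f := fun x (_ : x ∈ A) => ((⟪x, u⟫ : ℝ) : EReal)) a h le_rfl

/-- weak duality for semilinear second order discrete systems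
(Example 3.1). -/
theorem stmt13 {n r N : ℕ} (hN : 2 ≤ N)
    (A₀ A₁ : Matrix (Fin n) (Fin n) ℝ) (B : Matrix (Fin n) (Fin r) ℝ)
    (U : Set (En r)) (hU : U.Nonempty) (Q₀ Q₁ : Set (En n))
    (φ : En n × En n → EReal)
    (x : ℕ → En n) (u : ℕ → En r)
    (hu : ∀ t, t ≤ N - 2 → u t ∈ U)
    (hdyn : ∀ t, t ≤ N - 2 → x (t + 2) =
      Matrix.toEuclideanLin A₀ (x t) + Matrix.toEuclideanLin A₁ (x (t + 1)) +
        Matrix.toEuclideanLin B (u t))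
    (hx0 : x 0 ∈ Q₀) (hx1 : x 1 ∈ Q₁)
    (x' : ℕ → En n)
    (hadj : ∀ t, t ≤ N - 2 → x' t =
      Matrix.toEuclideanLin A₀ᵀ (x' (t + 2)) + Matrix.toEuclideanLin A₁ᵀ (x' (t + 1))) :
    -(fconj2 φ (Matrix.toEuclideanLin A₁ᵀ (x' N) - x' (N - 1)) (-(x' N)))
      - (∑ t ∈ Finset.range (N - 1), suppFn U (Matrix.toEuclideanLin Bᵀ (x' (t + 2))))
      - suppFn Q₀ (x' 0 - Matrix.toEuclideanLin A₁ᵀ (x' 1)) - suppFn Q₁ (x' 1)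
      ≤ φ (x (N - 1), x N) := by
  obtain ⟨M, rfl⟩ : ∃ M, N = M + 1 := ⟨N - 1, by omega⟩
  simp only [Nat.add_sub_cancel]
  have key := discrete_identity M A₀ A₁ B x u x' (fun t ht => hdyn t (by omega))
    (fun t ht => hadj t (by omega))
  have hS : ((∑ t ∈ Finset.range M, ⟪u t, Matrix.toEuclideanLin Bᵀ (x' (t + 2))⟫ : ℝ) : EReal)
      ≤ ∑ t ∈ Finset.range M, suppFn U (Matrix.toEuclideanLin Bᵀ (x' (t + 2))) := by
    rw [coe_sum_EReal]
    refine Finset.sum_le_sum fun t ht => le_suppFn (hu t ?_) _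
    have := Finset.mem_range.1 ht
    omega
  have h0 := le_suppFn hx0 (x' 0 - Matrix.toEuclideanLin A₁ᵀ (x' 1))
  have h1 := le_suppFn hx1 (x' 1)
  have hc : ((⟪x M, Matrix.toEuclideanLin A₁ᵀ (x' (M + 1)) - x' M⟫
        + ⟪x (M + 1), -(x' (M + 1))⟫ : ℝ) : EReal) - φ (x M, x (M + 1))
      ≤ fconj2 φ (Matrix.toEuclideanLin A₁ᵀ (x' (M + 1)) - x' M) (-(x' (M + 1))) :=
    le_iSup (fun p : En n × En n =>
      ((⟪p.1, Matrix.toEuclideanLin A₁ᵀ (x' (M + 1)) - x' M⟫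
        + ⟪p.2, -(x' (M + 1))⟫ : ℝ) : EReal) - φ p) (x M, x (M + 1))
  rw [key] at hc
  refine (EReal.sub_le_sub (EReal.sub_le_sub (EReal.sub_le_sub
    (EReal.neg_le_neg_iff.2 hc) hS) h0) h1).trans ?_
  generalize φ (x M, x (M + 1)) = y
  generalize (∑ t ∈ Finset.range M, ⟪u t, Matrix.toEuclideanLin Bᵀ (x' (t + 2))⟫ : ℝ) = S
  generalize ⟪x 0, x' 0 - Matrix.toEuclideanLin A₁ᵀ (x' 1)⟫ = d
  generalize ⟪x 1, x' 1⟫ = e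
  induction y using EReal.rec with
  | bot => rw [EReal.coe_sub_bot]; simp [sub_eq_add_neg]
  | top => exact le_top
  | coe y =>
    norm_cast
    linarith
end
end

section
/- (Theorem 5.1, sufficient optimality conditions for second order differential inclusions.) Let F(·,t) : ℝⁿ × ℝⁿ ⇉ ℝⁿ be a convex set-valued mapping for each t ∈ [0,1], Q₀, Q₁ ⊆ ℝⁿ nonempty convex sets, and φ : ℝⁿ × ℝⁿ → ℝ convex and continuous. Let x̃ be a feasible trajectory of (P_C), and suppose there exist functions x*, v* : [0,1] → ℝⁿ with x*, x*' absolutely continuous, x*'' ∈ L¹, and v* absolutely continuous with v*' ∈ L¹, such that for a.e. t ∈ [0,1]: (a) (x*''(t) + v*'(t), v*(t)) ∈ F*(x*(t); (x̃(t), x̃'(t), x̃''(t)), t); (b) x̃''(t) ∈ F_A(x̃(t), x̃'(t), x*(t), t); and the transversality conditions (c) v*(0) + x*'(0) ∈ K*_{Q₀}(x̃(0)) and −x*(0) ∈ K*_{Q₁}(x̃'(0)); (d) (v*(1) + x*'(1), −x*(1)) ∈ ∂φ(x̃(1), x̃'(1)). Then x̃ is optimal: φ(x(1), x'(1)) ≥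 φ(x̃(1), x̃'(1)) for every feasible trajectory x of (P_C). -/
open scoped RealInnerProductSpace Pointwise
open MeasureTheory Matrix

noncomputable section

lemma scalar_parts {f f' g g' : ℝ → ℝ}
    (hf' : IntervalIntegrable f' volume 0 1) (hg' : IntervalIntegrable g' volume 0 1)
    (hf : ∀ t ∈ Set.Icc (0 : ℝ) 1, f t = f 0 + ∫ s in (0 : ℝ)..t, f' s)
    (hg : ∀ t ∈ Set.Icc (0 : ℝ) 1, g t = g 0 + ∫ s in (0 : ℝ)..t, g' s) :
    IntervalIntegrable (fun t => f' t * g t + f t * g' t) volume 0 1 ∧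
    ∫ t in (0 : ℝ)..1, (f' t * g t + f t * g' t) = f 1 * g 1 - f 0 * g 0 := by
  have key : ∀ {h h' : ℝ → ℝ}, IntervalIntegrable h' volume 0 1 →
      AbsolutelyContinuousOnInterval (fun t => h 0 + ∫ s in (0 : ℝ)..t, h' s) 0 1 := by
    intro h h' hh
    have h1 := hh.absolutelyContinuousOnInterval_intervalIntegral (c := 0) (by simp)
    have h2 : AbsolutelyContinuousOnInterval (fun _ : ℝ => h 0) 0 1 :=
      (LipschitzWith.const (h 0)).lipschitzOnWith.absolutelyContinuousOnInterval
    exact h2.add h1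
  have hF := key (h := f) hf'
  have hG := key (h := g) hg'
  have hI := Set.uIcc_of_le (zero_le_one' ℝ)
  have hfc : ContinuousOn f (Set.uIcc 0 1) :=
    hF.continuousOn.congr (fun t ht => hf t (by rwa [hI] at ht))
  have hgc : ContinuousOn g (Set.uIcc 0 1) :=
    hG.continuousOn.congr (fun t ht => hg t (by rwa [hI] at ht))
  refine ⟨(hf'.mul_continuousOn hgc).add (hg'.continuousOn_mul hfc), ?_⟩
  have e := hF.integral_deriv_mul_eq_sub hG
  simp only [← hf 1 (by simp), ← hg 1 (by simp), intervalIntegral.integral_same, add_zero] at e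
  rw [← e]
  apply intervalIntegral.integral_congr_ae
  filter_upwards [hf'.ae_hasDerivAt_integral, hg'.ae_hasDerivAt_integral] with t h1 h2 ht
  have ht' : t ∈ Set.uIcc (0 : ℝ) 1 := Set.uIoc_subset_uIcc ht
  rw [((h1 ht' 0 (by simp)).const_add (f 0)).deriv, ((h2 ht' 0 (by simp)).const_add (g 0)).deriv]
  rw [hI] at ht'
  rw [← hf t ht', ← hg t ht']

lemma AC.coord {n : ℕ} {f f' : ℝ → En n} (h : AC f f') (i : Fin n) :
    IntervalIntegrable (fun t => f' t i) volume 0 1 ∧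
    ∀ t ∈ Set.Icc (0 : ℝ) 1, f t i = f 0 i + ∫ s in (0 : ℝ)..t, f' s i := by
  have hI : IntervalIntegrable f' volume 0 1 :=
    (intervalIntegrable_iff_integrableOn_Icc_of_le zero_le_one).2 h.1
  refine ⟨?_, fun t ht => ?_⟩
  · rw [intervalIntegrable_iff] at hI ⊢
    exact (EuclideanSpace.proj i : En n →L[ℝ] ℝ).integrable_comp hI
  · have hIt : IntervalIntegrable f' volume 0 t :=
      hI.mono_set (by rw [Set.uIcc_of_le ht.1, Set.uIcc_of_le zero_le_one]
                      exact Set.Icc_subset_Icc le_rfl ht.2)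
    have e := (EuclideanSpace.proj i : En n →L[ℝ] ℝ).intervalIntegral_comp_comm hIt
    have e2 := congrArg (fun v : En n => v i) (h.2 t ht)
    simp only [PiLp.add_apply] at e2
    rw [e2]
    congr 1
    exact e.symm

lemma AC.parts {n : ℕ} {f f' g g' : ℝ → En n} (hf : AC f f') (hg : AC g g') :
    IntervalIntegrable (fun t => ⟪f' t, g t⟫ + ⟪f t, g' t⟫) volume 0 1 ∧
    ∫ t in (0 : ℝ)..1, (⟪f' t, g t⟫ + ⟪f t, g' t⟫) = ⟪f 1, g 1⟫ - ⟪f 0, g 0⟫ := by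
  have inn : ∀ u v : En n, ⟪u, v⟫ = ∑ i, u i * v i := by
    intro u v
    simp [PiLp.inner_apply, mul_comm]
  have H := fun i => scalar_parts (hf.coord i).1 (hg.coord i).1 (hf.coord i).2 (hg.coord i).2
  simp only [inn, ← Finset.sum_add_distrib, ← Finset.sum_sub_distrib]
  constructor
  · rw [intervalIntegrable_iff]
    exact integrable_finsetSum _ (fun i _ => intervalIntegrable_iff.1 (H i).1)
  · rw [intervalIntegral.integral_finsetSum (fun i _ => (H i).1)]
    exact Finset.sum_congr rfl (fun i _ => (H i).2)

lemma AC.add {n : ℕ} {f f' g g' : ℝ → En n} (hf : AC f f') (hg : AC g g') :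
    AC (fun t => f t + g t) (fun t => f' t + g' t) := by
  refine ⟨hf.1.add hg.1, fun t ht => ?_⟩
  have hI : ∀ {h : ℝ → En n}, IntegrableOn h (Set.Icc (0 : ℝ) 1) →
      IntervalIntegrable h volume 0 t := fun hh =>
    (intervalIntegrable_iff_integrableOn_Icc_of_le ht.1).2
      (hh.mono_set (Set.Icc_subset_Icc le_rfl ht.2))
  rw [intervalIntegral.integral_add (hI hf.1) (hI hg.1)]
  simp only [hf.2 t ht, hg.2 t ht]
  abel

lemma AC.sub {n : ℕ} {f f' g g' : ℝ → En n} (hf : AC f f') (hg : AC g g') :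
    AC (fun t => f t - g t) (fun t => f' t - g' t) := by
  refine ⟨hf.1.sub hg.1, fun t ht => ?_⟩
  have hI : ∀ {h : ℝ → En n}, IntegrableOn h (Set.Icc (0 : ℝ) 1) →
      IntervalIntegrable h volume 0 t := fun hh =>
    (intervalIntegrable_iff_integrableOn_Icc_of_le ht.1).2
      (hh.mono_set (Set.Icc_subset_Icc le_rfl ht.2))
  rw [intervalIntegral.integral_sub (hI hf.1) (hI hg.1)]
  simp only [hf.2 t ht, hg.2 t ht]
  abel

/-- Theorem 5.1, sufficient optimality conditions for second order
differential inclusions.  Here `xs, xs', xs''` stand for `x*, x*', x*''` and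
`vs, vs'` for `v*, v*'`. -/
theorem stmt14 {n : ℕ}
    (F : ℝ → En n → En n → Set (En n))
    (hFconv : ∀ t ∈ Set.Icc (0 : ℝ) 1, Convex ℝ (gph (F t)))
    (Q₀ Q₁ : Set (En n)) (hQ₀c : Convex ℝ Q₀) (hQ₁c : Convex ℝ Q₁)
    (hQ₀ne : Q₀.Nonempty) (hQ₁ne : Q₁.Nonempty)
    (φ : En n × En n → ℝ) (hφconv : ConvexOn ℝ Set.univ φ) (hφcont : Continuous φ)
    (xt xt' xt'' : ℝ → En n) (hxt : FeasTraj F Q₀ Q₁ xt xt' xt'')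
    (xs xs' xs'' vs vs' : ℝ → En n)
    (hxsAC : AC xs xs') (hxs'AC : AC xs' xs'') (hvsAC : AC vs vs')
    (ha : ∀ᵐ t ∂(volume.restrict (Set.Icc (0 : ℝ) 1)),
      (xs'' t + vs' t, vs t) ∈ LAM (F t) (xs t) (xt t) (xt' t))
    (hb : ∀ᵐ t ∂(volume.restrict (Set.Icc (0 : ℝ) 1)),
      xt'' t ∈ FA (F t) (xt t) (xt' t) (xs t))
    (hc0 : vs 0 + xs' 0 ∈ Kstar Q₀ (xt 0))
    (hc1 : -(xs 0) ∈ Kstar Q₁ (xt' 0))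
    (hd : (vs 1 + xs' 1, -(xs 1)) ∈ subdiffR2 φ (xt 1, xt' 1)) :
    ∀ x x' x'' : ℝ → En n, FeasTraj F Q₀ Q₁ x x' x'' →
      φ (xt 1, xt' 1) ≤ φ (x 1, x' 1) := by
  intro x x' x'' hx
  have hh : AC (fun t => x t - xt t) (fun t => x' t - xt' t) :=
    AC.sub ⟨hx.int', hx.hx⟩ ⟨hxt.int', hxt.hx⟩
  have hh' : AC (fun t => x' t - xt' t) (fun t => x'' t - xt'' t) :=
    AC.sub ⟨hx.int'', hx.hx'⟩ ⟨hxt.int'', hxt.hx'⟩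
  obtain ⟨i1, e1⟩ := (hvsAC.add hxs'AC).parts hh
  obtain ⟨i2, e2⟩ := hxsAC.parts hh'
  have hpos : 0 ≤ ∫ t in (0 : ℝ)..1,
      ((⟪vs' t + xs'' t, x t - xt t⟫ + ⟪vs t + xs' t, x' t - xt' t⟫)
        - (⟪xs' t, x' t - xt' t⟫ + ⟪xs t, x'' t - xt'' t⟫)) := by
    apply intervalIntegral.integral_nonneg_of_ae_restrict zero_le_one
    filter_upwards [ha, hb, hx.incl] with t h1 h2 h3
    have h4 := h1 (x t) (x' t)
    rw [← h2.2] at h4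
    have h5 : ((⟪x'' t, xs t⟫ : ℝ) : EReal) ≤ HF (F t) (x t) (x' t) (xs t) :=
      le_iSup₂_of_le (x'' t) h3 le_rfl
    have h6 := (EReal.sub_le_sub h5 (le_refl ((⟪xt'' t, xs t⟫ : ℝ) : EReal))).trans h4
    rw [← EReal.coe_sub, EReal.coe_le_coe_iff] at h6
    have h7 := real_inner_comm (xs t) (x'' t)
    have h8 := real_inner_comm (xs t) (xt'' t)
    simp only [inner_add_left, inner_sub_right, Pi.zero_apply] at h6 ⊢
    linarith
  rw [intervalIntegral.integral_sub i1 i2, e1, e2] at hpos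
  have c0 := hc0 (x 0) hx.q0
  have c1 := hc1 (x' 0) hx.q1
  have d := hd (x 1, x' 1)
  simp only [inner_neg_left] at c1 d
  linarith
end
end

section
/- (Weak duality for second order differential inclusions, inequality (32) in Theorem 5.2.) Let F(·,t) : ℝⁿ × ℝⁿ ⇉ ℝⁿ for t ∈ [0,1], Q₀, Q₁ ⊆ ℝⁿ, and φ : ℝⁿ × ℝⁿ → ℝ ∪ {+∞}. Let x be a feasible trajectory of (P_C), and let x*, v* : [0,1] → ℝⁿ be such that x*, x*' are absolutely continuous with x*'' ∈ L¹, v* is absolutely continuous with v*' ∈ L¹, and the function t ↦ M_{F(·,t)}(x*''(t) + v*'(t), v*(t), x*(t)) is real-valued a.e. and Lebesgue integrable on [0,1]. Then φ(x(1), x'(1)) ≥ −φ*(v*(1) + x*'(1), −x*(1)) + ∫₀¹ M_{F(·,t)}(x*''(t) + v*'(t), v*(t), x*(t)) dt − W_{Q₀}(−v*(0) − x*'(0)) − W_{Q₁}(x*(0)), as an inequality in ℝ ∪ {±∞}. -/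
open scoped RealInnerProductSpace Pointwise
open MeasureTheory Matrix

noncomputable section

theorem ac_scalar_parts (f f' g g' : ℝ → ℝ)
    (hf' : IntegrableOn f' (Set.Icc (0 : ℝ) 1)) (hg' : IntegrableOn g' (Set.Icc (0 : ℝ) 1))
    (hf : ∀ t ∈ Set.Icc (0 : ℝ) 1, f t = f 0 + ∫ s in (0 : ℝ)..t, f' s)
    (hg : ∀ t ∈ Set.Icc (0 : ℝ) 1, g t = g 0 + ∫ s in (0 : ℝ)..t, g' s) :
    (∫ t in (0 : ℝ)..1, (f' t * g t + f t * g' t)) = f 1 * g 1 - f 0 * g 0 := by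
  have h01 : (0 : ℝ) ≤ 1 := zero_le_one
  have hif : IntervalIntegrable f' volume 0 1 :=
    (intervalIntegrable_iff_integrableOn_Icc_of_le h01).2 hf'
  have hig : IntervalIntegrable g' volume 0 1 :=
    (intervalIntegrable_iff_integrableOn_Icc_of_le h01).2 hg'
  have hc : ∀ c : ℝ, AbsolutelyContinuousOnInterval (fun _ : ℝ => c) 0 1 := fun c =>
    ((LipschitzWith.const c).lipschitzOnWith).absolutelyContinuousOnInterval
  have hF : AbsolutelyContinuousOnInterval (fun t => f 0 + ∫ s in (0 : ℝ)..t, f' s) 0 1 :=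
    (hc (f 0)).add (hif.absolutelyContinuousOnInterval_intervalIntegral (c := 0) (by simp))
  have hG : AbsolutelyContinuousOnInterval (fun t => g 0 + ∫ s in (0 : ℝ)..t, g' s) 0 1 :=
    (hc (g 0)).add (hig.absolutelyContinuousOnInterval_intervalIntegral (c := 0) (by simp))
  have key := hF.integral_deriv_mul_eq_sub hG
  simp only [← hf 1 ⟨h01, le_rfl⟩, ← hg 1 ⟨h01, le_rfl⟩, intervalIntegral.integral_same,
    add_zero] at key
  rw [← key]
  apply intervalIntegral.integral_congr_ae
  filter_upwards [hif.ae_hasDerivAt_integral, hig.ae_hasDerivAt_integral] with t h1 h2 ht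
  have ht' : t ∈ Set.uIcc (0 : ℝ) 1 := Set.uIoc_subset_uIcc ht
  have ht2 : t ∈ Set.Icc (0 : ℝ) 1 := by rwa [Set.uIcc_of_le h01] at ht'
  rw [((h1 ht' 0 (by simp)).const_add (f 0)).deriv, ((h2 ht' 0 (by simp)).const_add (g 0)).deriv,
    ← hf t ht2, ← hg t ht2]

theorem ac_contOn {n : ℕ} {f f' : ℝ → En n} (hf : AC f f') :
    ContinuousOn f (Set.Icc (0 : ℝ) 1) := by
  have : ContinuousOn (fun t => f 0 + ∫ s in (0 : ℝ)..t, f' s) (Set.Icc (0 : ℝ) 1) := by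
    refine continuousOn_const.add ?_
    have := intervalIntegral.continuousOn_primitive_interval (μ := volume) (f := f') (a := 0)
      (b := 1) (by rw [Set.uIcc_of_le zero_le_one]; exact hf.1)
    rwa [Set.uIcc_of_le zero_le_one] at this
  exact this.congr hf.2

theorem ac_coord {n : ℕ} {f f' : ℝ → En n} (hf : AC f f') (i : Fin n) :
    IntegrableOn (fun t => f' t i) (Set.Icc (0 : ℝ) 1) ∧
    ∀ t ∈ Set.Icc (0 : ℝ) 1, f t i = f 0 i + ∫ s in (0 : ℝ)..t, f' s i := by
  let L : En n →L[ℝ] ℝ := EuclideanSpace.proj i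
  refine ⟨L.integrable_comp hf.1, fun t ht => ?_⟩
  have hi : IntervalIntegrable f' volume 0 t := by
    rw [intervalIntegrable_iff_integrableOn_Icc_of_le ht.1]
    exact hf.1.mono_set (Set.Icc_subset_Icc_right ht.2)
  have h2 := L.intervalIntegral_comp_comm hi
  have h3 : L (f t) = L (f 0) + L (∫ s in (0 : ℝ)..t, f' s) := by
    rw [← map_add, ← hf.2 t ht]
  rw [← h2] at h3
  exact h3

theorem ac_coord_int {n : ℕ} {f f' g g' : ℝ → En n} (hf : AC f f') (hg : AC g g') (i : Fin n) :
    IntegrableOn (fun t => f' t i * g t i) (Set.Icc (0 : ℝ) 1) := by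
  have hc : ContinuousOn (fun t => g t i) (Set.Icc (0 : ℝ) 1) :=
    (EuclideanSpace.proj (𝕜 := ℝ) i).continuous.comp_continuousOn (ac_contOn hg)
  exact (ac_coord hf i).1.mul_continuousOn hc isCompact_Icc

theorem en_inner_eq {n : ℕ} (a b : En n) : ⟪a, b⟫ = ∑ i, a i * b i := by
  simp [PiLp.inner_apply, mul_comm]

theorem ac_inner_int {n : ℕ} {f f' g g' : ℝ → En n} (hf : AC f f') (hg : AC g g') :
    IntegrableOn (fun t => ⟪f' t, g t⟫) (Set.Icc (0 : ℝ) 1) := by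
  simp only [en_inner_eq]
  exact integrable_finsetSum _ fun i _ => ac_coord_int hf hg i

theorem ac_inner_int2 {n : ℕ} {f f' g g' : ℝ → En n} (hf : AC f f') (hg : AC g g') :
    IntegrableOn (fun t => ⟪f t, g' t⟫) (Set.Icc (0 : ℝ) 1) := by
  simpa only [real_inner_comm] using ac_inner_int hg hf

theorem ac_parts {n : ℕ} {f f' g g' : ℝ → En n} (hf : AC f f') (hg : AC g g') :
    (∫ t in Set.Icc (0 : ℝ) 1, ⟪f' t, g t⟫) + (∫ t in Set.Icc (0 : ℝ) 1, ⟪f t, g' t⟫)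
      = ⟪f 1, g 1⟫ - ⟪f 0, g 0⟫ := by
  rw [← integral_add (ac_inner_int hf hg) (ac_inner_int2 hf hg)]
  simp only [en_inner_eq, ← Finset.sum_add_distrib, ← Finset.sum_sub_distrib]
  have h2 : ∀ i, IntegrableOn (fun t => f t i * g' t i) (Set.Icc (0 : ℝ) 1) := fun i => by
    simpa only [mul_comm] using ac_coord_int hg hf i
  rw [integral_finsetSum _ (fun i _ => by exact (ac_coord_int hf hg i).add (h2 i))]
  refine Finset.sum_congr rfl fun i _ => ?_
  rw [← ac_scalar_parts (fun t => f t i) (fun t => f' t i) (fun t => g t i) (fun t => g' t i)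
    (ac_coord hf i).1 (ac_coord hg i).1 (ac_coord hf i).2 (ac_coord hg i).2,
    integral_Icc_eq_integral_Ioc, intervalIntegral.integral_of_le zero_le_one]

/-- weak duality for second order differential inclusions
(inequality (32) in Theorem 5.2).  Here `xs, xs', xs''` stand for `x*, x*', x*''`
and `vs, vs'` for `v*, v*'`; `g` is the a.e. real value of the integrand. -/
theorem stmt15 {n : ℕ}
    (F : ℝ → En n → En n → Set (En n)) (Q₀ Q₁ : Set (En n))
    (φ : En n × En n → EReal)
    (x x' x'' : ℝ → En n) (hx : FeasTraj F Q₀ Q₁ x x' x'')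
    (xs xs' xs'' vs vs' : ℝ → En n)
    (hxsAC : AC xs xs') (hxs'AC : AC xs' xs'') (hvsAC : AC vs vs')
    (g : ℝ → ℝ) (hg : MeasureTheory.IntegrableOn g (Set.Icc (0 : ℝ) 1))
    (hrepr : ∀ᵐ t ∂(volume.restrict (Set.Icc (0 : ℝ) 1)),
      MF (F t) (xs'' t + vs' t) (vs t) (xs t) = ((g t : ℝ) : EReal)) :
    -(fconj2 φ (vs 1 + xs' 1) (-(xs 1)))
      + (((∫ t in Set.Icc (0 : ℝ) 1, g t) : ℝ) : EReal)
      - suppFn Q₀ (-(vs 0) - xs' 0) - suppFn Q₁ (xs 0)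
      ≤ φ (x 1, x' 1) := by
  have hX : AC x x' := ⟨hx.int', hx.hx⟩
  have hX' : AC x' x'' := ⟨hx.int'', hx.hx'⟩
  have p1 := ac_parts hX hvsAC
  have p2 := ac_parts hX hxs'AC
  have p3 := ac_parts hX' hxsAC
  have i1 := ac_inner_int hX hvsAC
  have i2 := ac_inner_int2 hX hvsAC
  have i3 := ac_inner_int2 hX hxs'AC
  have i4 := ac_inner_int hX' hxsAC
  have hle : (∫ t in Set.Icc (0 : ℝ) 1, g t) ≤
      ∫ t in Set.Icc (0 : ℝ) 1, (⟪x t, xs'' t⟫ + ⟪x t, vs' t⟫ + ⟪x' t, vs t⟫ - ⟪x'' t, xs t⟫) := by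
    refine integral_mono_ae hg (((i3.add i2).add i1).sub i4) ?_
    filter_upwards [hrepr, hx.incl] with t h1 h2
    have h3 : MF (F t) (xs'' t + vs' t) (vs t) (xs t) ≤
        ((⟪x t, xs'' t + vs' t⟫ + ⟪x' t, vs t⟫ - ⟪x'' t, xs t⟫ : ℝ) : EReal) :=
      iInf_le_of_le (x t) (iInf_le_of_le (x' t) (iInf_le_of_le (x'' t) (iInf_le_of_le h2 le_rfl)))
    rw [h1, EReal.coe_le_coe_iff, inner_add_right] at h3
    exact h3
  have e1 : (∫ t in Set.Icc (0 : ℝ) 1,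
      (⟪x t, xs'' t⟫ + ⟪x t, vs' t⟫ + ⟪x' t, vs t⟫ - ⟪x'' t, xs t⟫))
      = (∫ t in Set.Icc (0 : ℝ) 1, ⟪x t, xs'' t⟫) + (∫ t in Set.Icc (0 : ℝ) 1, ⟪x t, vs' t⟫)
        + (∫ t in Set.Icc (0 : ℝ) 1, ⟪x' t, vs t⟫)
        - ∫ t in Set.Icc (0 : ℝ) 1, ⟪x'' t, xs t⟫ := by
    rw [← integral_add i3 i2, ← integral_add (by exact i3.add i2) i1,
      ← integral_sub (by exact (i3.add i2).add i1) i4]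
  rw [e1] at hle
  generalize (∫ t in Set.Icc (0 : ℝ) 1, g t) = I at hle ⊢
  have hconj : ((⟪x 1, vs 1 + xs' 1⟫ + ⟪x' 1, -(xs 1)⟫ : ℝ) : EReal) - φ (x 1, x' 1)
      ≤ fconj2 φ (vs 1 + xs' 1) (-(xs 1)) :=
    le_iSup (fun p : En n × En n =>
      ((⟪p.1, vs 1 + xs' 1⟫ + ⟪p.2, -(xs 1)⟫ : ℝ) : EReal) - φ p) (x 1, x' 1)
  have hW0 : ((⟪x 0, -(vs 0) - xs' 0⟫ : ℝ) : EReal) ≤ suppFn Q₀ (-(vs 0) - xs' 0) :=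
    le_iSup₂_of_le (x 0) hx.q0 le_rfl
  have hW1 : ((⟪x' 0, xs 0⟫ : ℝ) : EReal) ≤ suppFn Q₁ (xs 0) :=
    le_iSup₂_of_le (x' 0) hx.q1 le_rfl
  refine (EReal.sub_le_sub (EReal.sub_le_sub (add_le_add_left
    (EReal.neg_le_neg_iff.2 hconj) _) hW0) hW1).trans ?_
  induction φ (x 1, x' 1) with
  | bot => simp
  | top => exact le_top
  | coe r =>
    norm_cast
    simp only [inner_add_right, inner_neg_right, inner_sub_right]
    linarith
end
end
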